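/- For every infinite cardinal λ with λ ≤ 𝔠, where 𝔠 = 2^{ℵ₀}, there exist 2^λ mutually non-homeomorphic connected, locally connected Hausdorff spaces of cardinality ℵ₀ and weight λ. -/

import Mathlib

open Cardinal Set Topology

/-- The weight of a topological space: the least cardinality of a basis for its topology. -/
noncomputable def tweight (X : Type) [TopologicalSpace X] : Cardinal :=
  sInf { c : Cardinal | ∃ B : Set (Set X), TopologicalSpace.IsTopologicalBasis B ∧ #B = c }

/-- A space is scattered if every nonempty subset has a point isolated in that subset. -/
def Scattered (X : Type) [TopologicalSpace X] : Prop :=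
  ∀ S : Set X, S.Nonempty → ∃ x ∈ S, ∃ U : Set X, IsOpen U ∧ U ∩ S = {x}

/-- Strong zero-dimensionality: every closed set contained in an open set can be
separated from its complement by an open-closed set. -/
def StronglyZeroDimensional (X : Type) [TopologicalSpace X] : Prop :=
  ∀ A U : Set X, IsClosed A → IsOpen U → A ⊆ U →
    ∃ V : Set X, IsOpen V ∧ IsClosed V ∧ A ⊆ V ∧ V ⊆ U

/-- A space is hereditarily paracompact if every subspace is paracompact. -/
def HereditarilyParacompact (X : Type) [TopologicalSpace X] : Prop :=
  ∀ S : Set X, ParacompactSpace S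

/-- A space is perfectly normal iff it is normal and every closed set is a Gδ-set. -/
def PerfectlyNormal (X : Type) [TopologicalSpace X] : Prop :=
  NormalSpace X ∧ ∀ C : Set X, IsClosed C → IsGδ C

/-- A Hausdorff space is almost discrete iff the complement of some point is discrete. -/
def AlmostDiscrete (X : Type) [TopologicalSpace X] : Prop :=
  T2Space X ∧ ∃ x : X, DiscreteTopology ({x}ᶜ : Set X)

/-- A space is almost metrizable iff it is perfectly normal and the complement of some
point is metrizable. -/
def AlmostMetrizable (X : Type) [TopologicalSpace X] : Prop :=
  PerfectlyNormal X ∧ ∃ x : X, TopologicalSpace.MetrizableSpace ({x}ᶜ : Set X)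

/-- There is a family of `n` pairwise non-homeomorphic spaces, all with property `P`. -/
def ExistsNonHomeoFamily (n : Cardinal) (P : (X : Type) → TopologicalSpace X → Prop) : Prop :=
  ∃ (ι : Type) (F : ι → Type) (t : (i : ι) → TopologicalSpace (F i)),
    #ι = n ∧ (∀ i, P (F i) (t i)) ∧
      ∀ i j, i ≠ j → IsEmpty (@Homeomorph (F i) (F j) (t i) (t j))

/-- Every family of pairwise non-homeomorphic spaces with property `P` has at most `n`
members. -/
def NonHomeoUpperBound (n : Cardinal) (P : (X : Type) → TopologicalSpace X → Prop) : Prop :=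
  ∀ (ι : Type) (F : ι → Type) (t : (i : ι) → TopologicalSpace (F i)),
    (∀ i, P (F i) (t i)) →
    (∀ i j, i ≠ j → IsEmpty (@Homeomorph (F i) (F j) (t i) (t j))) → #ι ≤ n

/-- There are precisely `n` spaces with property `P`, up to homeomorphism. -/
def PreciselyNonHomeo (n : Cardinal) (P : (X : Type) → TopologicalSpace X → Prop) : Prop :=
  ExistsNonHomeoFamily n P ∧ NonHomeoUpperBound n P

/-!
Let `Q` be a countable poset and let `X` carry a map to `Q` together with partial two-valued
coordinates, so that all finite coordinate patterns occur over every point of `Q`. Taking the sets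
where the map lies below a given point or a coordinate has a given value as subbasic open sets makes
`X` locally connected of weight the number of coordinates, and any set of at most `𝔠` coordinates is
possible on a countable `X`, by the Hewitt–Marczewski–Pondiczery construction. Two points of `X`
have neighbourhoods with disjoint closures exactly when their images in `Q` do, for the topology of
lower sets.

If `2 ^ λ > 𝔠`, fix `Q`: different sets of coordinates give `2 ^ λ` different topologies on one
countable set, and each homeomorphism class contains at most `𝔠` of them. If `2 ^ λ ≤ 𝔠`, take for
`Q` the finite cliques of a complete multipartite graph: the graph on `X` joining points that have
neighbourhoods with disjoint closures then has the block sizes as sizes of its maximal cliques, and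
the block sizes can encode an arbitrary subset of `ℕ`.
-/

open Filter Function TopologicalSpace

section Counting

theorem mk_setOf_homeomorph_le {X Y : Type} [Countable X] [Countable Y] (u : TopologicalSpace Y) :
    #{t : TopologicalSpace X | Nonempty (@Homeomorph X Y t u)} ≤ 𝔠 := by
  have hsub : {t : TopologicalSpace X | Nonempty (@Homeomorph X Y t u)} ⊆
      range fun f : X → Y => induced f u := fun t ⟨f⟩ => ⟨f, f.induced_eq⟩
  calc #{t : TopologicalSpace X | Nonempty (@Homeomorph X Y t u)}
      ≤ #(X → Y) := (mk_le_mk_of_subset hsub).trans mk_range_le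
    _ = #Y ^ #X := (power_def Y X).symm
    _ ≤ 𝔠 ^ #X := power_le_power_right (mk_le_aleph0.trans aleph0_le_continuum)
    _ ≤ 𝔠 ^ ℵ₀ := power_le_power_left continuum_ne_zero mk_le_aleph0
    _ = 𝔠 := continuum_power_aleph0

theorem existsNonHomeoFamily_of_injective {ι X : Type} [Countable X]
    {P : (X : Type) → TopologicalSpace X → Prop} (t : ι → TopologicalSpace X) (ht : Injective t)
    (hι : 𝔠 < #ι) (hP : ∀ i, P X (t i)) : ExistsNonHomeoFamily #ι P := by
  let r : Setoid ι :=
    { r := fun i j => Nonempty (@Homeomorph X X (t i) (t j))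
      iseqv :=
        { refl := fun i => ⟨@Homeomorph.refl X (t i)⟩
          symm := fun {i j} ⟨f⟩ => ⟨@Homeomorph.symm X X (t i) (t j) f⟩
          trans := fun {i j k} ⟨f⟩ ⟨g⟩ =>
            ⟨@Homeomorph.trans X X X (t i) (t j) (t k) f g⟩ } }
  have hfiber (c : Quotient r) : #(Quotient.mk r ⁻¹' {c}) ≤ 𝔠 := by
    refine (mk_le_mk_of_subset fun i hi => ?_).trans
      ((mk_preimage_of_injective t _ ht).trans (mk_setOf_homeomorph_le (t c.out)))
    exact Quotient.exact ((mem_singleton_iff.1 hi).trans c.out_eq.symm)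
  refine ⟨Quotient r, fun _ => X, fun c => t c.out, ?_, fun c => hP _, fun c d hcd => ⟨fun f => ?_⟩⟩
  · refine mk_quotient_le.antisymm (not_lt.1 fun hlt => ?_)
    have hmul : #(Quotient r) * 𝔠 < #ι :=
      mul_lt_of_lt (aleph0_le_continuum.trans hι.le) hlt hι
    exact (mk_le_mk_mul_of_mk_preimage_le _ hfiber).not_gt hmul
  · exact hcd (Quotient.out_equiv_out.1 ⟨f⟩)

end Counting

section Weight

theorem mk_le_of_finite_setOf_subset {X ι : Type} [TopologicalSpace X] [Infinite ι]
    {B : Set (Set X)} (hB : IsTopologicalBasis B) (U : ι → Set X) (hU : ∀ i, IsOpen (U i))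
    (hne : ∀ i, (U i).Nonempty)
    (hfin : ∀ V : Set X, IsOpen V → V.Nonempty → {i | V ⊆ U i}.Finite) : #ι ≤ #B := by
  have hsub (i : ι) : ∃ V : B, V.1.Nonempty ∧ V.1 ⊆ U i := by
    obtain ⟨x, hx⟩ := hne i
    obtain ⟨V, hV, hxV, hVU⟩ := hB.exists_subset_of_mem_open hx (hU i)
    exact ⟨⟨V, hV⟩, ⟨x, hxV⟩, hVU⟩
  choose V hVne hVU using hsub
  by_contra! hlt
  obtain ⟨b, hb⟩ := exists_infinite_fiber V hlt
  obtain ⟨i, rfl⟩ : (V ⁻¹' {b}).Nonempty := (infinite_coe_iff.1 hb).nonempty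
  refine infinite_coe_iff.1 hb ((hfin _ (hB.isOpen (V i).2) (hVne i)).subset fun j hj => ?_)
  rw [← show V j = V i from hj]
  exact hVU j

end Weight

section MaximalCliques

/-- The numbers `n` for which `G` has a maximal clique with exactly `n` vertices. A clique is given
by an enumeration `a` of its vertices. -/
def maximalCliqueSizes {V : Type*} (G : SimpleGraph V) : Set ℕ :=
  {n | ∃ a : Fin n → V, Pairwise (fun i j => G.Adj (a i) (a j)) ∧ ∀ v, ∃ i, ¬ G.Adj v (a i)}

theorem maximalCliqueSizes_comap {V W : Type*} (G : SimpleGraph W) {p : V → W}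
    (hp : Surjective p) : maximalCliqueSizes (G.comap p) = maximalCliqueSizes G := by
  ext n
  constructor
  · rintro ⟨a, hadj, hmax⟩
    exact ⟨p ∘ a, hadj, hp.forall.2 hmax⟩
  · rintro ⟨a, hadj, hmax⟩
    obtain ⟨b, rfl⟩ : ∃ b, p ∘ b = a := ⟨surjInv hp ∘ a, funext fun i => surjInv_eq hp (a i)⟩
    exact ⟨b, hadj, fun v => hmax (p v)⟩

end MaximalCliques

section UrysohnGraph

variable {X Y : Type*} [TopologicalSpace X] [TopologicalSpace Y]

/-- The graph joining two points of a space if they have neighbourhoods with disjoint closures; it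
is complete iff the space is a Urysohn space (`T25Space`). -/
def urysohnGraph (X : Type*) [TopologicalSpace X] : SimpleGraph X where
  Adj x y := Disjoint ((𝓝 x).lift' closure) ((𝓝 y).lift' closure)
  symm := ⟨fun _ _ h => h.symm⟩
  loopless := ⟨fun x h => by
    rw [disjoint_self, Filter.lift'_closure_eq_bot] at h
    exact NeBot.ne inferInstance h⟩

theorem urysohnGraph_comap_homeomorph (f : X ≃ₜ Y) : (urysohnGraph Y).comap f = urysohnGraph X := by
  ext x y
  simp only [urysohnGraph, SimpleGraph.comap_adj, ← f.map_nhds_eq,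
    f.isClosedMap.lift'_closure_map_eq f.continuous, disjoint_map f.injective]

theorem maximalCliqueSizes_urysohnGraph_congr (f : X ≃ₜ Y) :
    maximalCliqueSizes (urysohnGraph X) = maximalCliqueSizes (urysohnGraph Y) := by
  rw [← urysohnGraph_comap_homeomorph f, maximalCliqueSizes_comap _ f.surjective]

theorem mem_connectedComponent_of_not_urysohnGraph_adj [LocallyConnectedSpace X] {x y : X}
    (h : ¬ (urysohnGraph X).Adj x y) : y ∈ connectedComponent x := by
  by_contra hy
  have hC : IsClopen (connectedComponent x) := isClopen_connectedComponent
  refine h (Filter.disjoint_iff.2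
    ⟨_, mem_lift' (hC.isOpen.mem_nhds mem_connectedComponent),
      _, mem_lift' (hC.compl.isOpen.mem_nhds hy), ?_⟩)
  rw [hC.isClosed.closure_eq, hC.compl.isClosed.closure_eq]
  exact disjoint_compl_right

theorem connectedSpace_of_isIsolated_urysohnGraph [LocallyConnectedSpace X] {x : X}
    (hx : (urysohnGraph X).IsIsolated x) : ConnectedSpace X :=
  connectedSpace_iff_connectedComponent.2
    ⟨x, eq_univ_of_forall fun y => mem_connectedComponent_of_not_urysohnGraph_adj (hx y)⟩

end UrysohnGraph

theorem isPreconnected_of_forall_closure_inter {X : Type*} [TopologicalSpace X] {s : Set X}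
    (h : ∀ U V, IsOpen U → IsOpen V → (s ∩ U).Nonempty → (s ∩ V).Nonempty →
      (s ∩ (closure (s ∩ U) ∩ closure (s ∩ V))).Nonempty) : IsPreconnected s := by
  intro U V hU hV hsUV hsU hsV
  obtain ⟨z, hz, hzU, hzV⟩ := h U V hU hV hsU hsV
  rcases hsUV hz with hz' | hz'
  · obtain ⟨w, hwU, hws, hwV⟩ := mem_closure_iff.1 hzV U hU hz'
    exact ⟨w, hws, hwU, hwV⟩
  · obtain ⟨w, hwV, hws, hwU⟩ := mem_closure_iff.1 hzU V hV hz'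
    exact ⟨w, hws, hwU, hwV⟩

section OrderUrysohnGraph

variable {Q : Type*} [Preorder Q]

/-- The Urysohn graph of the topology of lower sets on `Q`, in order-theoretic terms: the closure of
the least neighbourhood `Set.Iic a` of `a` consists of the `c` with `BddBelow {a, c}`. -/
def orderUrysohnGraph (Q : Type*) [Preorder Q] : SimpleGraph Q where
  Adj a b := ¬ ∃ c, BddBelow {a, c} ∧ BddBelow {b, c}
  symm := ⟨fun _ _ h ⟨c, hb, ha⟩ => h ⟨c, ha, hb⟩⟩
  loopless := ⟨fun a h => h ⟨a, by simp, by simp⟩⟩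

theorem isIsolated_orderUrysohnGraph [OrderBot Q] (a : Q) : (orderUrysohnGraph Q).IsIsolated a :=
  fun _ h => h ⟨⊥, by simp, by simp⟩

end OrderUrysohnGraph

section FiniteClique

variable {V : Type*} {G : SimpleGraph V}

/-- The poset of nonempty finite cliques of a graph, ordered by inclusion. -/
abbrev FiniteClique (G : SimpleGraph V) : Type _ :=
  {s : Finset V // s.Nonempty ∧ G.IsClique s}

theorem bddBelow_pair_finiteClique {s t : FiniteClique G} :
    BddBelow {s, t} ↔ ∃ v, v ∈ s.1 ∧ v ∈ t.1 := by
  constructor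
  · rintro ⟨r, hr⟩
    obtain ⟨v, hv⟩ := r.2.1
    exact ⟨v, hr (mem_insert s {t}) hv, hr (mem_insert_of_mem s rfl) hv⟩
  · rintro ⟨v, hs, ht⟩
    refine ⟨⟨{v}, by simp⟩, ?_⟩
    rintro r (rfl | rfl)
    · exact Finset.singleton_subset_iff.2 hs
    · exact Finset.singleton_subset_iff.2 ht

theorem orderUrysohnGraph_finiteClique_adj {s t : FiniteClique G} :
    (orderUrysohnGraph (FiniteClique G)).Adj s t ↔ ∀ v ∈ s.1, ∀ w ∈ t.1, Gᶜ.Adj v w := by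
  classical
  simp only [orderUrysohnGraph, bddBelow_pair_finiteClique, SimpleGraph.compl_adj]
  constructor
  · refine fun h v hv w hw => ⟨?_, fun hvw => ?_⟩
    · rintro rfl
      exact h ⟨s, ⟨v, hv, hv⟩, v, hw, hv⟩
    · exact h ⟨⟨{v, w}, by simp [hvw]⟩,
        ⟨v, hv, by simp⟩, w, hw, by simp⟩
  · rintro h ⟨r, ⟨v, hvs, hvr⟩, w, hwt, hwr⟩
    exact (h v hvs w hwt).2 (r.2.2 hvr hwr (h v hvs w hwt).1)

end FiniteClique

section CompleteMultipartiteGraph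

variable {ι : Type*} {V : ι → Type*}

theorem compl_completeMultipartiteGraph_adj {v w : Σ k, V k} :
    (SimpleGraph.completeMultipartiteGraph V)ᶜ.Adj v w ↔ v ≠ w ∧ v.1 = w.1 := by
  simp [SimpleGraph.completeMultipartiteGraph]

theorem exists_isIsolated_finiteClique_completeMultipartiteGraph [Nontrivial ι]
    [∀ k, Nonempty (V k)] :
    ∃ e : FiniteClique (SimpleGraph.completeMultipartiteGraph V),
      (orderUrysohnGraph _).IsIsolated e := by
  classical
  obtain ⟨k, l, hkl⟩ := exists_pair_ne ι
  let v : Σ k, V k := ⟨k, Classical.arbitrary _⟩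
  let w : Σ k, V k := ⟨l, Classical.arbitrary _⟩
  have hvw : (SimpleGraph.completeMultipartiteGraph V).Adj v w := hkl
  refine ⟨⟨{v, w}, by simpa using fun _ => hvw⟩, fun t h => ?_⟩
  obtain ⟨u, hu⟩ := t.2.1
  rw [orderUrysohnGraph_finiteClique_adj] at h
  have hk := (compl_completeMultipartiteGraph_adj.1 (h v (by simp) u hu)).2
  have hl := (compl_completeMultipartiteGraph_adj.1 (h w (by simp) u hu)).2
  exact hkl (hk.trans hl.symm)

theorem mem_maximalCliqueSizes_of_equiv [∀ k, Nonempty (V k)] {n : ℕ} {k : ι} (f : Fin n ≃ V k) :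
    n ∈ maximalCliqueSizes
      (orderUrysohnGraph (FiniteClique (SimpleGraph.completeMultipartiteGraph V))) := by
  refine ⟨fun i => ⟨{⟨k, f i⟩}, by simp⟩, fun i j hij => ?_, fun s => ?_⟩
  · simpa [orderUrysohnGraph_finiteClique_adj, compl_completeMultipartiteGraph_adj] using hij
  · simp only [orderUrysohnGraph_finiteClique_adj, compl_completeMultipartiteGraph_adj]
    obtain ⟨⟨l, x⟩, hx⟩ := s.2.1
    rcases eq_or_ne l k with rfl | hlk
    · refine ⟨f.symm x, fun h => (h _ hx _ (Finset.mem_singleton_self _)).1 ?_⟩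
      rw [f.apply_symm_apply]
    · exact ⟨f.symm (Classical.arbitrary _),
        fun h => hlk (h _ hx _ (Finset.mem_singleton_self _)).2⟩

theorem exists_equiv_of_mem_maximalCliqueSizes {n : ℕ} (hn : 2 ≤ n)
    (h : n ∈ maximalCliqueSizes
      (orderUrysohnGraph (FiniteClique (SimpleGraph.completeMultipartiteGraph V)))) :
    ∃ k, Nonempty (Fin n ≃ V k) := by
  obtain ⟨a, hadj, hmax⟩ := h
  have : Nontrivial (Fin n) := Fin.nontrivial_iff_two_le.2 hn
  simp only [orderUrysohnGraph_finiteClique_adj, compl_completeMultipartiteGraph_adj] at hadj hmax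
  choose v hv using fun i => (a i).2.1
  let k := (v ⟨0, by lia⟩).1
  have hvk (i) : (v i).1 = k := by
    rcases eq_or_ne i ⟨0, by lia⟩ with rfl | hi
    · rfl
    · exact (hadj hi _ (hv _) _ (hv _)).2
  have hsingle (i) : ∀ u ∈ (a i).1, u = v i := by
    intro u hu
    by_contra hne
    obtain ⟨j, hj⟩ := exists_ne i
    exact (a i).2.2 hu (hv i) hne (by rw [(hadj hj.symm u hu _ (hv j)).2, hvk, hvk])
  have hrange (i) : v i ∈ range (Sigma.mk k) := by
    rw [range_sigmaMk]
    exact hvk i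
  choose f hf using hrange
  refine ⟨k, ⟨Equiv.ofBijective f ⟨fun i j hij => ?_, fun x => ?_⟩⟩⟩
  · by_contra hne
    exact (hadj hne _ (hv i) _ (hv j)).1 (by rw [← hf, ← hf, hij])
  · obtain ⟨i, hi⟩ := hmax ⟨{⟨k, x⟩}, by simp⟩
    refine ⟨i, by_contra fun hne => hi fun u hu w hw => ?_⟩
    rw [Finset.mem_singleton.1 hu, hsingle i w hw, ← hf i]
    exact ⟨fun h => hne (sigma_mk_injective h).symm, rfl⟩

end CompleteMultipartiteGraph

section FinitelyDense

variable {E J J' K : Type*}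

/-- The range of `h` is dense in the power `J → K` of the discrete space `K`: every finite pattern
of coordinates occurs among the `h e`. -/
def FinitelyDense (h : E → J → K) : Prop :=
  ∀ (F : Finset J) (g : J → K), ∃ e, ∀ j ∈ F, h e j = g j

theorem FinitelyDense.comp_injective [Nonempty K] {h : E → J → K} (hh : FinitelyDense h)
    {σ : J' → J} (hσ : Injective σ) : FinitelyDense fun e => h e ∘ σ := by
  intro F g
  obtain ⟨g, rfl⟩ := hσ.surjective_comp_right g
  obtain ⟨e, he⟩ := hh (F.map ⟨σ, hσ⟩) g
  exact ⟨e, fun j hj => he (σ j) (Finset.mem_map_of_mem _ hj)⟩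

theorem eventually_injOn_restrict {α : Type*} {G : Set (ℕ → α)} (hG : G.Finite) :
    ∀ᶠ n in atTop, InjOn (fun x (k : Fin n) => x k) G := by
  refine (eventually_all_finite hG).2 fun x _ => (eventually_all_finite hG).2 fun y _ => ?_
  rcases eq_or_ne x y with hxy | hxy
  · exact .of_forall fun _ _ => hxy
  · obtain ⟨k, hk⟩ := ne_iff.1 hxy
    filter_upwards [eventually_gt_atTop k] with n hn h
    exact absurd (congrFun h ⟨k, hn⟩) hk

/-- The Hewitt–Marczewski–Pondiczery theorem for countable discrete spaces. -/
theorem exists_finitelyDense {N : Type} (hN : #N ≤ 𝔠) (K : Type*) [Countable K] [Nonempty K] :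
    ∃ h : ℕ → N → K, FinitelyDense h := by
  obtain ⟨ι⟩ : Nonempty (N ↪ (ℕ → Bool)) := by
    rw [← Cardinal.le_def]
    simpa using hN
  obtain ⟨φ, hφ⟩ := exists_surjective_nat (Σ n : ℕ, (Fin n → Bool) → K)
  refine ⟨fun e j => (φ e).2 fun k => ι j k, fun F g => ?_⟩
  obtain ⟨n, hn⟩ := (eventually_injOn_restrict (F.finite_toSet.image ι)).exists
  let r (j : F) (k : Fin n) : Bool := ι j k
  have hr : Injective r := fun i j hij =>
    Subtype.ext (ι.injective (hn (mem_image_of_mem ι i.2) (mem_image_of_mem ι j.2) hij))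
  obtain ⟨p, hp⟩ := hr.surjective_comp_right fun j : F => g j
  obtain ⟨e, he⟩ := hφ ⟨n, p⟩
  refine ⟨e, fun j hj => ?_⟩
  beta_reduce
  rw [he]
  exact congrFun hp ⟨j, hj⟩

end FinitelyDense

section Separating

variable {X J J' : Type*}

/-- Any two points have different values in some coordinate of the partial two-valued labelling `l`,
where `none` stands for an undefined coordinate. -/
def Separating (l : X → J → Option Bool) : Prop :=
  Pairwise fun x y => ∃ j, l x j = some true ∧ l y j = some false

theorem Separating.of_comp {l : X → J → Option Bool} {σ : J' → J}
    (h : Separating fun x => l x ∘ σ) : Separating l := fun _ _ hxy =>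
  let ⟨i, hx, hy⟩ := h hxy
  ⟨σ i, hx, hy⟩

end Separating

/-- A set `X` over `Q` with partial two-valued coordinates indexed by `J` that separate points and
whose finite patterns all occur over each `q : Q`. -/
structure GenericLabelling (X Q J : Type*) where
  /-- The projection to `Q`. -/
  shape : X → Q
  /-- The partial coordinates. -/
  label : X → J → Option Bool
  finitelyDense : ∀ q, FinitelyDense fun x : shape ⁻¹' {q} => label x
  separating : Separating label

namespace GenericLabelling

variable {X Q J J' : Type*} (S : GenericLabelling X Q J)

theorem exists_shape_label (q : Q) (F : Finset J) (g : J → Option Bool) :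
    ∃ x, S.shape x = q ∧ ∀ j ∈ F, S.label x j = g j := by
  obtain ⟨⟨x, hx⟩, hg⟩ := S.finitelyDense q F g
  exact ⟨x, hx, hg⟩

theorem shape_surjective : Surjective S.shape := fun q =>
  (S.exists_shape_label q ∅ fun _ => none).imp fun _ => And.left

/-- Restriction of the coordinates along an injection, provided they still separate points. -/
def comap (σ : J' → J) (hσ : Injective σ) (hsep : Separating fun x => S.label x ∘ σ) :
    GenericLabelling X Q J' where
  shape := S.shape
  label x := S.label x ∘ σ
  finitelyDense q := (S.finitelyDense q).comp_injective hσ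
  separating := hsep

variable [Preorder Q]

/-- The basic neighbourhoods: the points whose shape is below that of `x` and whose coordinates in
`F` extend those of `x`. -/
def nbhd (x : X) (F : Finset J) : Set X :=
  {y | S.shape y ≤ S.shape x ∧ ∀ j ∈ F, ∀ b, S.label x j = some b → S.label y j = some b}

variable {S}

theorem self_mem_nbhd (x : X) (F : Finset J) : x ∈ S.nbhd x F :=
  ⟨le_rfl, fun _ _ _ => id⟩

theorem nbhd_subset_nbhd {x y : X} {F G : Finset J} (hy : y ∈ S.nbhd x F) (hFG : F ⊆ G) :
    S.nbhd y G ⊆ S.nbhd x F := fun _ hz =>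
  ⟨hz.1.trans hy.1, fun j hj b hb => hz.2 j (hFG hj) b (hy.2 j hj b hb)⟩

theorem mem_of_nbhd_subset_setOf_label {x : X} {F : Finset J} {j : J}
    (h : S.nbhd x F ⊆ {y | S.label y j = some true}) : j ∈ F := by
  classical
  by_contra hj
  obtain ⟨y, hyx, hy⟩ := S.exists_shape_label (S.shape x) (insert j F) (update (S.label x) j none)
  have hyF : y ∈ S.nbhd x F := by
    refine ⟨hyx.le, fun i hi b hb => ?_⟩
    rw [hy i (Finset.mem_insert_of_mem hi), update_of_ne (ne_of_mem_of_not_mem hi hj), hb]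
  have hyj : S.label y j = none := by simpa using hy j (Finset.mem_insert_self _ _)
  exact Option.some_ne_none _ ((h hyF).symm.trans hyj)

theorem nbhd_comap {σ : J' → J} {hσ : Injective σ}
    {hsep : Separating fun x => S.label x ∘ σ} (x : X) (F : Finset J') :
    (S.comap σ hσ hsep).nbhd x F = S.nbhd x (F.map ⟨σ, hσ⟩) := by
  simp [nbhd, comap]

variable (S)

/-- The topology of the space `X` is the one in which shapes can only decrease, and defined
coordinates cannot change, in small neighbourhoods of a point. -/
def InducesTopology [TopologicalSpace X] : Prop :=
  IsTopologicalBasis (range fun p : X × Finset J => S.nbhd p.1 p.2)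

/-- The topology on `X` induced by `S`, see `GenericLabelling.InducesTopology`. -/
abbrev topology : TopologicalSpace X :=
  generateFrom (range fun p : X × Finset J => S.nbhd p.1 p.2)

theorem inducesTopology_topology :
    letI := S.topology
    S.InducesTopology :=
  letI := S.topology
  { exists_subset_inter := by
      classical
      rintro _ ⟨⟨x, F⟩, rfl⟩ _ ⟨⟨y, G⟩, rfl⟩ z ⟨hzx, hzy⟩
      exact ⟨S.nbhd z (F ∪ G), ⟨(z, F ∪ G), rfl⟩, self_mem_nbhd z _, subset_inter
        (nbhd_subset_nbhd hzx Finset.subset_union_left)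
        (nbhd_subset_nbhd hzy Finset.subset_union_right)⟩
    sUnion_eq := eq_univ_of_forall fun x => ⟨_, ⟨(x, ∅), rfl⟩, self_mem_nbhd x ∅⟩
    eq_generateFrom := rfl }

variable {S}

namespace InducesTopology

section

variable [TopologicalSpace X] (hS : S.InducesTopology)

include hS

theorem isOpen_nbhd (x : X) (F : Finset J) : IsOpen (S.nbhd x F) :=
  hS.isOpen ⟨(x, F), rfl⟩

theorem hasBasis_nhds (x : X) : (𝓝 x).HasBasis (fun _ => True) (S.nbhd x) := by
  refine ⟨fun U => hS.mem_nhds_iff.trans ?_⟩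
  constructor
  · rintro ⟨_, ⟨⟨y, F⟩, rfl⟩, hx, hU⟩
    exact ⟨F, trivial, (nbhd_subset_nbhd hx subset_rfl).trans hU⟩
  · rintro ⟨F, -, hU⟩
    exact ⟨_, ⟨(x, F), rfl⟩, self_mem_nbhd x F, hU⟩

theorem isOpen_setOf_label_eq_some (j : J) (b : Bool) : IsOpen {x | S.label x j = some b} :=
  isOpen_iff_mem_nhds.2 fun x hx => (hS.hasBasis_nhds x).mem_iff.2
    ⟨{j}, trivial, fun _ hy => hy.2 j (Finset.mem_singleton_self j) b hx⟩

theorem t2Space : T2Space X where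
  t2 x y hxy := by
    obtain ⟨j, hx, hy⟩ := S.separating hxy
    refine ⟨_, _, hS.isOpen_setOf_label_eq_some j true, hS.isOpen_setOf_label_eq_some j false,
      hx, hy, Set.disjoint_left.2 fun z (ht : S.label z j = _) (hf : S.label z j = _) => ?_⟩
    simp [ht] at hf

theorem mem_closure_nbhd_iff {x z : X} {F : Finset J} :
    z ∈ closure (S.nbhd x F) ↔ BddBelow {S.shape x, S.shape z} ∧
      ∀ j ∈ F, ∀ b c, S.label x j = some b → S.label z j = some c → b = c := by
  classical
  rw [mem_closure_iff_nhds_basis (hS.hasBasis_nhds z)]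
  constructor
  · intro h
    obtain ⟨w, hwx, hwz⟩ := h F trivial
    refine ⟨⟨S.shape w, by simp [hwx.1, hwz.1]⟩, fun j hj b c hb hc => ?_⟩
    exact Option.some_injective _ ((hwx.2 j hj b hb).symm.trans (hwz.2 j hj c hc))
  · rintro ⟨⟨q, hq⟩, hcompat⟩ G -
    obtain ⟨w, rfl, hw⟩ := S.exists_shape_label q (F ∪ G) fun j => (S.label z j).or (S.label x j)
    refine ⟨w, ⟨hq (by simp), fun j hj b hb => ?_⟩, ⟨hq (by simp), fun j hj c hc => ?_⟩⟩
    · rw [hw j (Finset.mem_union_left _ hj), hb]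
      cases hc : S.label z j with
      | none => rfl
      | some c => rw [hcompat j hj b c hb hc, Option.some_or]
    · rw [hw j (Finset.mem_union_right _ hj), hc, Option.some_or]

theorem isPreconnected_nbhd (x : X) (F : Finset J) :
    IsPreconnected (S.nbhd x F) := by
  classical
  refine isPreconnected_of_forall_closure_inter fun U V hU hV ⟨u, hu, huU⟩ ⟨v, hv, hvV⟩ => ?_
  obtain ⟨G, -, hG⟩ := (hS.hasBasis_nhds u).mem_iff.1
    (((hS.isOpen_nbhd x F).inter hU).mem_nhds ⟨hu, huU⟩)
  obtain ⟨H, -, hH⟩ := (hS.hasBasis_nhds v).mem_iff.1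
    (((hS.isOpen_nbhd x F).inter hV).mem_nhds ⟨hv, hvV⟩)
  -- `z` has so few coordinates that it is in the closure of every basic set inside `S.nbhd x F`.
  obtain ⟨z, hzx, hz⟩ := S.exists_shape_label (S.shape x) (F ∪ (G ∪ H)) fun j =>
    if j ∈ F then S.label x j else none
  have hclosure {w : X} (hw : w ∈ S.nbhd x F) {I : Finset J} (hI : I ⊆ G ∪ H) :
      z ∈ closure (S.nbhd w I) := by
    refine hS.mem_closure_nbhd_iff.2 ⟨⟨S.shape w, by simp [hzx, hw.1]⟩, fun j hj b c hb hc => ?_⟩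
    rw [hz j (Finset.mem_union_right _ (hI hj)), Option.ite_none_right_eq_some] at hc
    exact Option.some_injective _ (hb.symm.trans (hw.2 j hc.1 c hc.2))
  refine ⟨z, ⟨hzx.le, fun j hj b hb => ?_⟩,
    closure_mono hG (hclosure hu Finset.subset_union_left),
    closure_mono hH (hclosure hv Finset.subset_union_right)⟩
  rw [hz j (Finset.mem_union_left _ hj), if_pos hj, hb]

theorem locallyConnectedSpace : LocallyConnectedSpace X :=
  locallyConnectedSpace_of_connected_bases _ _ hS.hasBasis_nhds fun x F _ =>
    hS.isPreconnected_nbhd x F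

theorem urysohnGraph_eq_comap : urysohnGraph X = (orderUrysohnGraph Q).comap S.shape := by
  classical
  ext x y
  refine ((hS.hasBasis_nhds x).lift'_closure.disjoint_iff
    (hS.hasBasis_nhds y).lift'_closure).trans ?_
  constructor
  · rintro ⟨F, -, G, -, hFG⟩ ⟨q, hx, hy⟩
    obtain ⟨z, rfl, hz⟩ := S.exists_shape_label q (F ∪ G) fun _ => none
    refine Set.disjoint_left.1 hFG (hS.mem_closure_nbhd_iff.2 ⟨hx, fun j hj b c _ hc => ?_⟩)
      (hS.mem_closure_nbhd_iff.2 ⟨hy, fun j hj b c _ hc => ?_⟩)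
    · simp [hz j (Finset.mem_union_left _ hj)] at hc
    · simp [hz j (Finset.mem_union_right _ hj)] at hc
  · exact fun h => ⟨∅, trivial, ∅, trivial, Set.disjoint_left.2 fun z hx hy =>
      h ⟨S.shape z, (hS.mem_closure_nbhd_iff.1 hx).1, (hS.mem_closure_nbhd_iff.1 hy).1⟩⟩

theorem connectedSpace_of_isIsolated {q : Q} (hq : (orderUrysohnGraph Q).IsIsolated q) :
    ConnectedSpace X := by
  obtain ⟨x, rfl⟩ := S.shape_surjective q
  have := hS.locallyConnectedSpace
  refine connectedSpace_of_isIsolated_urysohnGraph (x := x) fun y => ?_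
  rw [hS.urysohnGraph_eq_comap]
  exact hq (S.shape y)

theorem maximalCliqueSizes_urysohnGraph :
    maximalCliqueSizes (urysohnGraph X) = maximalCliqueSizes (orderUrysohnGraph Q) := by
  rw [hS.urysohnGraph_eq_comap, maximalCliqueSizes_comap _ S.shape_surjective]

end

theorem isOpen_comap_setOf_label_iff [TopologicalSpace X] [Nonempty Q] {σ : J' → J}
    {hσ : Injective σ} {hsep : Separating fun x => S.label x ∘ σ}
    (hS : (S.comap σ hσ hsep).InducesTopology) (j : J) :
    IsOpen {x | S.label x j = some true} ↔ j ∈ range σ := by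
  constructor
  · intro hopen
    obtain ⟨x, -, hx⟩ := S.exists_shape_label (Classical.arbitrary Q) {j} fun _ => some true
    obtain ⟨F, -, hF⟩ := (hS.hasBasis_nhds x).mem_iff.1
      (hopen.mem_nhds (hx j (Finset.mem_singleton_self j)))
    obtain ⟨i, -, rfl⟩ :=
      Finset.mem_map.1 (mem_of_nbhd_subset_setOf_label ((nbhd_comap x F).symm.trans_subset hF))
    exact mem_range_self i
  · rintro ⟨i, rfl⟩
    exact hS.isOpen_setOf_label_eq_some i true

theorem tweight_eq {X Q J : Type} [TopologicalSpace X] [Preorder Q] [Nonempty Q] [Infinite J]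
    {S : GenericLabelling X Q J} (hS : S.InducesTopology) (hX : #X ≤ #J) : tweight X = #J := by
  apply le_antisymm
  · calc tweight X
        ≤ #(range fun p : X × Finset J => S.nbhd p.1 p.2) := csInf_le' ⟨_, hS, rfl⟩
      _ ≤ #(X × Finset J) := mk_range_le
      _ = #X * #J := by rw [mk_prod, lift_id, lift_id, mk_finset_of_infinite]
      _ ≤ #J * #J := by gcongr
      _ = #J := mul_eq_self (aleph0_le_mk J)
  · refine le_csInf ⟨_, _, hS, rfl⟩ ?_
    rintro _ ⟨B, hB, rfl⟩
    refine mk_le_of_finite_setOf_subset hB (fun j => {x | S.label x j = some true})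
      (fun j => hS.isOpen_setOf_label_eq_some j true) (fun j => ?_) fun V hV ⟨x, hx⟩ => ?_
    · obtain ⟨x, -, hx⟩ := S.exists_shape_label (Classical.arbitrary Q) {j} fun _ => some true
      exact ⟨x, hx j (Finset.mem_singleton_self j)⟩
    · obtain ⟨F, -, hF⟩ := (hS.hasBasis_nhds x).mem_iff.1 (hV.mem_nhds hx)
      exact F.finite_toSet.subset fun j hj => mem_of_nbhd_subset_setOf_label (hF.trans hj)

end InducesTopology

theorem range_eq_of_topology_comap_eq [Nonempty Q] {σ τ : J' → J}
    {hσ : Injective σ} {hτ : Injective τ}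
    {hsepσ : Separating fun x => S.label x ∘ σ} {hsepτ : Separating fun x => S.label x ∘ τ}
    (h : (S.comap σ hσ hsepσ).topology = (S.comap τ hτ hsepτ).topology) : range σ = range τ := by
  let _ := (S.comap σ hσ hsepσ).topology
  have hσ' : (S.comap σ hσ hsepσ).InducesTopology :=
    (S.comap σ hσ hsepσ).inducesTopology_topology
  have hτ' : (S.comap τ hτ hsepτ).InducesTopology := by
    convert (S.comap τ hτ hsepτ).inducesTopology_topology
  ext j
  rw [← hσ'.isOpen_comap_setOf_label_iff, hτ'.isOpen_comap_setOf_label_iff]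

end GenericLabelling

/-- The class of connected, locally connected Hausdorff spaces of cardinality `ℵ₀` and weight `lam`,
in the form expected by `ExistsNonHomeoFamily`. -/
def IsCountableConnectedT2 (lam : Cardinal) (X : Type) (t : TopologicalSpace X) : Prop :=
  letI := t
  T2Space X ∧ ConnectedSpace X ∧ LocallyConnectedSpace X ∧ #X = ℵ₀ ∧ tweight X = lam

theorem GenericLabelling.isCountableConnectedT2 {X Q J : Type} [Preorder Q] [Countable X]
    [Infinite X] [Infinite J] (S : GenericLabelling X Q J) {q : Q}
    (hq : (orderUrysohnGraph Q).IsIsolated q) : IsCountableConnectedT2 #J X S.topology := by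
  let _ := S.topology
  have hS := S.inducesTopology_topology
  have : Nonempty Q := ⟨q⟩
  exact ⟨hS.t2Space, hS.connectedSpace_of_isIsolated hq, hS.locallyConnectedSpace, mk_eq_aleph0 X,
    hS.tweight_eq (mk_le_aleph0.trans (aleph0_le_mk J))⟩

section TruncatedLabelling

variable {Q M : Type*} [Encodable Q]

/-- Coordinates for the points `(q, e, k)`: those of `h e`, except that the coordinates `inl i` with
`k ≤ i` are replaced by the indicator function, as a function of `q, e, k`, of the point whose code
is the first component of `i`. -/
def truncatedLabel (h : ℕ → ℕ ⊕ M → Option Bool) (x : Q × ℕ × ℕ) : ℕ ⊕ M → Option Bool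
  | .inl i =>
    if i < x.2.2 then h x.2.1 (.inl i) else some (decide (i.unpair.1 = Encodable.encode x))
  | .inr m => h x.2.1 (.inr m)

theorem exists_truncatedLabel_eq (h : ℕ → ℕ ⊕ M → Option Bool) (F : Finset (ℕ ⊕ M)) :
    ∃ k, ∀ (q : Q) (e : ℕ), ∀ j ∈ F, truncatedLabel h (q, e, k) j = h e j := by
  refine ⟨F.toLeft.sup id + 1, fun q e j hj => ?_⟩
  cases j with
  | inl i => exact if_pos (Nat.lt_succ_of_le (Finset.le_sup (f := id) (Finset.mem_toLeft.2 hj)))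
  | inr m => rfl

theorem separating_truncatedLabel_comp_inl (h : ℕ → ℕ ⊕ M → Option Bool) :
    Separating fun x : Q × ℕ × ℕ => truncatedLabel h x ∘ .inl := by
  intro x y hxy
  have hle := Nat.right_le_pair (Encodable.encode x) (x.2.2 + y.2.2)
  refine ⟨Nat.pair (Encodable.encode x) (x.2.2 + y.2.2), (if_neg (by lia)).trans ?_,
    (if_neg (by lia)).trans ?_⟩
  · rw [Nat.unpair_pair, decide_eq_true rfl]
  · rw [Nat.unpair_pair, decide_eq_false (Encodable.encode_injective.ne hxy)]

/-- The labelling of `Q × ℕ × ℕ` by `truncatedLabel h`: truncating `h` makes the coordinates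
separate points without affecting any finite pattern of coordinates. -/
def truncatedLabelling (h : ℕ → ℕ ⊕ M → Option Bool) (hh : FinitelyDense h) :
    GenericLabelling (Q × ℕ × ℕ) Q (ℕ ⊕ M) where
  shape := Prod.fst
  label := truncatedLabel h
  finitelyDense q F g := by
    obtain ⟨e, he⟩ := hh F g
    obtain ⟨k, hk⟩ := exists_truncatedLabel_eq (Q := Q) h F
    exact ⟨⟨(q, e, k), rfl⟩, fun j hj => (hk q e j hj).trans (he j hj)⟩
  separating := (separating_truncatedLabel_comp_inl h).of_comp

end TruncatedLabelling

theorem existsNonHomeoFamily_of_continuum_lt {lam : Cardinal.{0}} (h0 : ℵ₀ ≤ lam) (h1 : lam ≤ 𝔠)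
    (hlt : 𝔠 < 2 ^ lam) : ExistsNonHomeoFamily (2 ^ lam) (IsCountableConnectedT2 lam) := by
  classical
  obtain ⟨M, rfl⟩ : ∃ M : Type, #M = lam := ⟨lam.out, mk_out lam⟩
  have hN : #(ℕ ⊕ M × Bool) ≤ 𝔠 := by
    simpa using add_le_of_le aleph0_le_continuum aleph0_le_continuum
      (mul_le_of_le aleph0_le_continuum h1 (nat_lt_continuum 2).le)
  obtain ⟨h, hh⟩ := exists_finitelyDense hN (Option Bool)
  let S : GenericLabelling (Unit × ℕ × ℕ) Unit (ℕ ⊕ M × Bool) := truncatedLabelling h hh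
  let σ (T : Set M) : ℕ ⊕ M → ℕ ⊕ M × Bool := Sum.map id fun m => (m, decide (m ∈ T))
  have hσ (T : Set M) : Injective (σ T) :=
    injective_id.sumMap fun _ _ hmn => congrArg Prod.fst hmn
  have hsep (T : Set M) : Separating fun x => S.label x ∘ σ T :=
    .of_comp (σ := .inl) (separating_truncatedLabel_comp_inl h)
  let S' (T : Set M) := S.comap (σ T) (hσ T) (hsep T)
  have hinj : Injective fun T => (S' T).topology := by
    intro T T' hTT'
    have hrange : range (σ T) = range (σ T') := GenericLabelling.range_eq_of_topology_comap_eq hTT'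
    ext m
    simpa [σ] using Set.ext_iff.1 hrange (.inr (m, true))
  have hJ : #(ℕ ⊕ M) = #M := by simpa using add_eq_right h0 h0
  rw [← mk_set] at hlt ⊢
  refine existsNonHomeoFamily_of_injective _ hinj hlt fun T => ?_
  rw [← hJ]
  exact (S' T).isCountableConnectedT2 (isIsolated_orderUrysohnGraph ())

/-- Block sizes encoding `A`: the block `k` has an odd number of vertices iff `k ∈ A`. -/
noncomputable def blockSize (A : Set ℕ) (k : ℕ) : ℕ :=
  2 * k + 2 + A.indicator 1 k

theorem mem_range_blockSize_iff (A : Set ℕ) (k : ℕ) : 2 * k + 3 ∈ range (blockSize A) ↔ k ∈ A := by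
  classical
  simp only [blockSize, indicator_apply, Pi.one_apply, mem_range]
  constructor
  · rintro ⟨l, hl⟩
    split_ifs at hl with hA
    · rwa [show k = l by lia]
    · lia
  · exact fun hk => ⟨k, by simp [hk]⟩

/-- The poset from which the space encoding `A` is built. -/
abbrev Skeleton (A : Set ℕ) : Type :=
  FiniteClique (SimpleGraph.completeMultipartiteGraph fun k => Fin (blockSize A k))

instance (A : Set ℕ) (k : ℕ) : NeZero (blockSize A k) := ⟨by rw [blockSize]; lia⟩

theorem mem_maximalCliqueSizes_skeleton_iff (A : Set ℕ) (k : ℕ) :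
    2 * k + 3 ∈ maximalCliqueSizes (orderUrysohnGraph (Skeleton A)) ↔ k ∈ A := by
  rw [← mem_range_blockSize_iff A k]
  constructor
  · intro h
    obtain ⟨l, ⟨f⟩⟩ := exists_equiv_of_mem_maximalCliqueSizes (by lia) h
    exact ⟨l, (Fin.equiv_iff_eq.1 ⟨f⟩).symm⟩
  · rintro ⟨l, hl⟩
    exact mem_maximalCliqueSizes_of_equiv (finCongr hl.symm)

theorem existsNonHomeoFamily_of_le_continuum {lam : Cardinal.{0}} (h0 : ℵ₀ ≤ lam) (h1 : lam ≤ 𝔠)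
    (hle : 2 ^ lam ≤ 𝔠) : ExistsNonHomeoFamily (2 ^ lam) (IsCountableConnectedT2 lam) := by
  obtain ⟨M, rfl⟩ : ∃ M : Type, #M = lam := ⟨lam.out, mk_out lam⟩
  have hJ : #(ℕ ⊕ M) = #M := by simpa using add_eq_right h0 h0
  obtain ⟨h, hh⟩ := exists_finitelyDense (hJ.trans_le h1) (Option Bool)
  let _ (A : Set ℕ) : Encodable (Skeleton A) := Encodable.ofCountable _
  let S (A : Set ℕ) : GenericLabelling (Skeleton A × ℕ × ℕ) (Skeleton A) (ℕ ⊕ M) :=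
    truncatedLabelling h hh
  refine ⟨Set ℕ, fun A => Skeleton A × ℕ × ℕ, fun A => (S A).topology, ?_, fun A => ?_, ?_⟩
  · rw [mk_set, mk_nat]
    exact (power_le_power_left two_ne_zero h0).antisymm hle
  · obtain ⟨e, he⟩ := exists_isIsolated_finiteClique_completeMultipartiteGraph
      (V := fun k => Fin (blockSize A k))
    have : Nonempty (Skeleton A) := ⟨e⟩
    rw [← hJ]
    exact (S A).isCountableConnectedT2 he
  · refine fun A B hAB => ⟨fun f => hAB (ext fun k => ?_)⟩
    let _ (A : Set ℕ) := (S A).topology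
    have hS (A : Set ℕ) := (S A).inducesTopology_topology.maximalCliqueSizes_urysohnGraph
    rw [← mem_maximalCliqueSizes_skeleton_iff A, ← mem_maximalCliqueSizes_skeleton_iff B,
      ← hS, ← hS, maximalCliqueSizes_urysohnGraph_congr f]

/-- Theorem 5: for every infinite `λ ≤ 𝔠` there exist `2 ^ λ` mutually non-homeomorphic
connected, locally connected Hausdorff spaces of cardinality `ℵ₀` and weight `λ`. -/
theorem stmt15 (lam : Cardinal) (h0 : ℵ₀ ≤ lam) (h1 : lam ≤ Cardinal.continuum) :
    ExistsNonHomeoFamily (2 ^ lam) (fun X t =>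
      letI := t
      T2Space X ∧ ConnectedSpace X ∧ LocallyConnectedSpace X ∧
        #X = ℵ₀ ∧ tweight X = lam) := by
  rcases lt_or_ge 𝔠 (2 ^ lam) with hlt | hle
  · exact existsNonHomeoFamily_of_continuum_lt h0 h1 hlt
  · exact existsNonHomeoFamily_of_le_continuum h0 h1 hle
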